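/- Discrete Itô–Tanaka–Meyer formula (Lemma 3.2). Let a ∈ ℝ^d, h > 0, and let f = (f¹,…,f^d) : G(a,h) → ℝ^d be a (time-independent) discrete conservative vector field. Let X_r = (X_r¹,…,X_r^d) (r ≥ 1) with each X_r^j ∈ {−1,1}, set S_0 = a, S_n = a + h(X_1 + ⋯ + X_n), t_n = n h². Then for every n ≥ 1: T_{S_0}^{S_n}(f, γ'₀) h = Σ_{r=1}^{n} Σ_{j=1}^{d} f^j(S_{r−1} + Σ_{i=1}^{j−1} h X_r^i e_i) · h X_r^j + ½ Σ_{x ∈ G(a,h)} Σ_{μ ∈ {−1,1}^d} ℓ_h^μ(t_n, x) · Σ_{j=1}^{d} μ^j [ f^j(x + Σ_{i=1}^{j} h μ^i e_i) − f^j(x + Σ_{i=1}^{j−1} h μ^i e_i) ], where the sum over x has only finitely many nonzero terms. -/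

import Mathlib

/- Shared discrete-path infrastructure. -/

namespace DiscretePaths

/-- The sign `±1` associated to a boolean orientation. -/
noncomputable def sgn (b : Bool) : ℝ := if b then 1 else -1

/-- The vector `μ h e_j` of an oriented grid edge, where the edge is encoded as
`e = (j, b)` with `μ = sgn b`. -/
noncomputable def stepVec (d : ℕ) (h : ℝ) (e : Fin d × Bool) : Fin d → ℝ :=
  fun i => if i = e.1 then sgn e.2 * h else 0

/-- The endpoint of a discrete path starting at `b`, given by its list of oriented edges. -/
noncomputable def pathEnd (d : ℕ) (h : ℝ) (b : Fin d → ℝ) :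
    List (Fin d × Bool) → (Fin d → ℝ)
  | [] => b
  | e :: γ => pathEnd d h (fun i => b i + stepVec d h e i) γ

/-- The trapezoidal sum `T_γ(f, γ'₀) h` of the vector field `f` over the discrete path
starting at `b` with oriented edges `γ`. -/
noncomputable def trapSum (d : ℕ) (h : ℝ) (f : (Fin d → ℝ) → Fin d → ℝ)
    (b : Fin d → ℝ) : List (Fin d × Bool) → ℝ
  | [] => 0
  | e :: γ => h / 2 * sgn e.2 * (f b e.1 + f (fun i => b i + stepVec d h e i) e.1)
      + trapSum d h f (fun i => b i + stepVec d h e i) γ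

/-- Membership in the grid `G(a,h) = a + hℤ^d`. -/
def InGrid (d : ℕ) (a : Fin d → ℝ) (h : ℝ) (x : Fin d → ℝ) : Prop :=
  ∃ k : Fin d → ℤ, ∀ i, x i = a i + h * k i

/-- A vector field on the grid `G(a,h)` is discrete conservative if its trapezoidal sum
over every closed discrete path vanishes. -/
def DiscreteConservative (d : ℕ) (a : Fin d → ℝ) (h : ℝ)
    (f : (Fin d → ℝ) → Fin d → ℝ) : Prop :=
  ∀ b, InGrid d a h b → ∀ γ : List (Fin d × Bool), pathEnd d h b γ = b →
    trapSum d h f b γ = 0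

end DiscretePaths

open DiscretePaths


namespace DiscretePaths

lemma pathEnd_append (d : ℕ) (h : ℝ) (γ δ : List (Fin d × Bool)) (b : Fin d → ℝ) :
    pathEnd d h b (γ ++ δ) = pathEnd d h (pathEnd d h b γ) δ := by
  induction γ generalizing b with
  | nil => rfl
  | cons e γ ih => exact ih _

lemma trapSum_append (d : ℕ) (h : ℝ) (f : (Fin d → ℝ) → Fin d → ℝ)
    (γ δ : List (Fin d × Bool)) (b : Fin d → ℝ) :
    trapSum d h f b (γ ++ δ) = trapSum d h f b γ + trapSum d h f (pathEnd d h b γ) δ := by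
  induction γ generalizing b with
  | nil => simp [trapSum, pathEnd]
  | cons e γ ih => simp only [List.cons_append, trapSum, pathEnd, ih]; ring

lemma sgn_not (b : Bool) : sgn (!b) = - sgn b := by
  cases b <;> simp [sgn]

lemma step_back (d : ℕ) (h : ℝ) (b : Fin d → ℝ) (e : Fin d × Bool) :
    (fun i => (fun i => b i + stepVec d h e i) i + stepVec d h (e.1, !e.2) i) = b := by
  funext i
  simp only [stepVec, sgn_not]
  split_ifs <;> ring

lemma exists_reverse (d : ℕ) (h : ℝ) (f : (Fin d → ℝ) → Fin d → ℝ)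
    (γ : List (Fin d × Bool)) (b : Fin d → ℝ) :
    ∃ δ, pathEnd d h (pathEnd d h b γ) δ = b ∧
      trapSum d h f (pathEnd d h b γ) δ = - trapSum d h f b γ := by
  induction γ generalizing b with
  | nil => exact ⟨[], rfl, by simp [trapSum]⟩
  | cons e γ ih =>
    obtain ⟨δ, h1, h2⟩ := ih (fun i => b i + stepVec d h e i)
    refine ⟨δ ++ [(e.1, !e.2)], ?_, ?_⟩
    · rw [pathEnd_append]
      simp only [pathEnd]
      rw [h1]
      exact step_back d h b e
    · rw [trapSum_append]
      simp only [pathEnd, trapSum]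
      rw [h1, h2]
      have := step_back d h b e
      simp only at this
      rw [this, sgn_not]
      ring

lemma path_indep (d : ℕ) (a : Fin d → ℝ) (h : ℝ) (f : (Fin d → ℝ) → Fin d → ℝ)
    (hf : DiscreteConservative d a h f) (γ δ : List (Fin d × Bool))
    (he : pathEnd d h a γ = pathEnd d h a δ) :
    trapSum d h f a γ = trapSum d h f a δ := by
  obtain ⟨ε, h1, h2⟩ := exists_reverse d h f δ a
  have := hf a ⟨0, by simp⟩ (γ ++ ε) (by rw [pathEnd_append, he, h1])
  rw [trapSum_append, he, h2] at this
  linarith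

lemma exists_step_path (d : ℕ) (h : ℝ) (f : (Fin d → ℝ) → Fin d → ℝ)
    (b : Fin d → ℝ) (μ : Fin d → Bool) (m : ℕ) (hm : m ≤ d) :
    ∃ γ, pathEnd d h b γ = (fun i => b i + if (i : ℕ) < m then h * sgn (μ i) else 0) ∧
      trapSum d h f b γ = ∑ j : Fin d, if (j : ℕ) < m then h / 2 * sgn (μ j) *
        (f (fun i => b i + if (i : ℕ) < (j : ℕ) then h * sgn (μ i) else 0) j +
         f (fun i => b i + if (i : ℕ) ≤ (j : ℕ) then h * sgn (μ i) else 0) j) else 0 := by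
  induction m with
  | zero => exact ⟨[], by simp [pathEnd], by simp [trapSum]⟩
  | succ m ih =>
    obtain ⟨γ, h1, h2⟩ := ih (by omega)
    have key : (fun i => (b i + if (i : ℕ) < m then h * sgn (μ i) else 0) +
        stepVec d h (⟨m, hm⟩, μ ⟨m, hm⟩) i) =
        (fun i => b i + if (i : ℕ) ≤ m then h * sgn (μ i) else 0) := by
      funext i
      simp only [stepVec]
      rcases lt_trichotomy (i : ℕ) m with hi | hi | hi
      · rw [if_pos hi, if_neg (by rintro rfl; simp at hi), if_pos hi.le, add_zero]
      · have : i = ⟨m, hm⟩ := Fin.ext hi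
        subst this
        simp [mul_comm]
      · rw [if_neg (by omega), if_neg (by rintro rfl; simp at hi), if_neg (by omega)]
        ring
    refine ⟨γ ++ [(⟨m, hm⟩, μ ⟨m, hm⟩)], ?_, ?_⟩
    · rw [pathEnd_append]
      simp only [pathEnd]
      rw [h1, key]
      simp only [Nat.lt_succ_iff]
    · rw [trapSum_append]
      simp only [trapSum]
      rw [h1, h2, key, add_zero]
      have : ∀ g : Fin d → ℝ, (∑ j : Fin d, if (j : ℕ) < m then g j else 0) + g ⟨m, hm⟩ =
          ∑ j : Fin d, if (j : ℕ) < m + 1 then g j else 0 := by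
        intro g
        have h3 : g ⟨m, hm⟩ = ∑ j : Fin d, if j = ⟨m, hm⟩ then g j else 0 := by simp
        rw [h3, ← Finset.sum_add_distrib]
        refine Finset.sum_congr rfl fun j _ => ?_
        rcases lt_trichotomy (j : ℕ) m with hi | hi | hi
        · rw [if_pos hi, if_neg (by rintro rfl; simp at hi), if_pos (by omega), add_zero]
        · have : j = ⟨m, hm⟩ := Fin.ext hi
          subst this
          simp
        · rw [if_neg (by omega), if_neg (by rintro rfl; simp at hi), if_neg (by omega)]
          ring
      exact this (fun j => h / 2 * sgn (μ j) *
        (f (fun i => b i + if (i : ℕ) < (j : ℕ) then h * sgn (μ i) else 0) j +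
         f (fun i => b i + if (i : ℕ) ≤ (j : ℕ) then h * sgn (μ i) else 0) j))

lemma exists_full_path (d : ℕ) (h : ℝ) (f : (Fin d → ℝ) → Fin d → ℝ)
    (M : ℕ → Fin d → Bool) (S : ℕ → Fin d → ℝ)
    (hS : ∀ n i, S (n + 1) i = S n i + h * sgn (M n i)) (n : ℕ) :
    ∃ γ, pathEnd d h (S 0) γ = S n ∧
      trapSum d h f (S 0) γ = ∑ r ∈ Finset.range n, ∑ j : Fin d, h / 2 * sgn (M r j) *
        (f (fun i => S r i + if (i : ℕ) < (j : ℕ) then h * sgn (M r i) else 0) j +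
         f (fun i => S r i + if (i : ℕ) ≤ (j : ℕ) then h * sgn (M r i) else 0) j) := by
  induction n with
  | zero => exact ⟨[], rfl, by simp [trapSum]⟩
  | succ n ih =>
    obtain ⟨γ, h1, h2⟩ := ih
    obtain ⟨δ, h3, h4⟩ := exists_step_path d h f (S n) (M n) d le_rfl
    refine ⟨γ ++ δ, ?_, ?_⟩
    · rw [pathEnd_append, h1, h3]
      funext i
      simp [hS]
    · rw [trapSum_append, h1, h2, h4, Finset.sum_range_succ]
      simp

end DiscretePaths

/-- **Discrete Itô–Tanaka–Meyer formula** (Lemma 3.2).  Here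
`ℓ_h^μ(t_n, x) = h · #{ j : 0 ≤ j < n, S_j = x, S_{j+1} = x + hμ }` is the partial local
time in direction `μ ∈ {−1,1}^d` (the direction `μ` is encoded by `μb : Fin d → Bool`
via `μ i = sgn (μb i)`), and the sum over the grid points `x = a + h k`, `k ∈ ℤ^d`, has
finitely many nonzero terms, so it is expressed as a `finsum`.  Since `f` is discrete
conservative, the trapezoidal sum from `S_0 = a` to `S_n` is path independent, and the
identity is stated for an arbitrary discrete path `γ` from `a` to `S_n`. -/
theorem discrete_ito_tanaka_meyer
    (d : ℕ) (a : Fin d → ℝ) (h : ℝ) (hh : 0 < h)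
    (f : (Fin d → ℝ) → Fin d → ℝ)
    (hf : DiscreteConservative d a h f)
    (X : ℕ → Fin d → ℝ)
    (hX : ∀ r : ℕ, ∀ j : Fin d, X r j = 1 ∨ X r j = -1)
    (S : ℕ → Fin d → ℝ)
    (hS : ∀ n i, S n i = a i + h * ∑ r ∈ Finset.range n, X (r + 1) i)
    (ℓ : ℕ → (Fin d → ℤ) → (Fin d → Bool) → ℝ)
    (hℓ : ∀ n k μb, ℓ n k μb = h * (Nat.card {j : ℕ // j < n ∧
        (∀ i, S j i = a i + h * k i) ∧
        (∀ i, S (j + 1) i = a i + h * k i + h * sgn (μb i))} : ℝ))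
    (n : ℕ) (hn : 1 ≤ n)
    (γ : List (Fin d × Bool)) (hγ : pathEnd d h a γ = S n) :
    (Function.support (fun k : Fin d → ℤ => ∑ μb : Fin d → Bool,
        ℓ n k μb * ∑ j : Fin d, sgn (μb j) *
          (f (fun i => a i + h * k i + if (i : ℕ) ≤ (j : ℕ) then h * sgn (μb i) else 0) j
            - f (fun i => a i + h * k i + if (i : ℕ) < (j : ℕ) then h * sgn (μb i) else 0) j))).Finite
    ∧
    trapSum d h f a γ
      = (∑ r ∈ Finset.Icc 1 n, ∑ j : Fin d,
          f (fun i => S (r - 1) i + if (i : ℕ) < (j : ℕ) then h * X r i else 0) j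
            * (h * X r j))
        + 1 / 2 * ∑ᶠ k : Fin d → ℤ, ∑ μb : Fin d → Bool,
            ℓ n k μb * ∑ j : Fin d, sgn (μb j) *
              (f (fun i => a i + h * k i + if (i : ℕ) ≤ (j : ℕ) then h * sgn (μb i) else 0) j
                - f (fun i => a i + h * k i + if (i : ℕ) < (j : ℕ) then h * sgn (μb i) else 0) j) := by
  classical
  choose Z hZ using (fun (r : ℕ) (j : Fin d) => (show ∃ z : ℤ, X r j = z by
    rcases hX r j with h1 | h1
    · exact ⟨1, by simp [h1]⟩
    · exact ⟨-1, by simp [h1]⟩))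
  choose M hM using (fun (r : ℕ) (j : Fin d) => (show ∃ b : Bool, X (r + 1) j = sgn b by
    rcases hX (r + 1) j with h1 | h1
    · exact ⟨true, by simp [h1, sgn]⟩
    · exact ⟨false, by simp [h1, sgn]⟩))
  have sgn_inj : ∀ b c : Bool, sgn b = sgn c → b = c := by
    intro b c
    cases b <;> cases c <;> simp [sgn] <;> norm_num
  set K : ℕ → Fin d → ℤ := fun n i => ∑ r ∈ Finset.range n, Z (r + 1) i with hK
  have hSK : ∀ n i, S n i = a i + h * K n i := by
    intro n i
    rw [hS, hK]
    push_cast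
    simp only [hZ]
  have hSs : ∀ n i, S (n + 1) i = S n i + h * sgn (M n i) := by
    intro n i
    rw [hS, hS, Finset.sum_range_succ, hM]
    ring
  have hS0 : S 0 = a := by funext i; simp [hS]
  set G : (Fin d → ℤ) → (Fin d → Bool) → ℝ := fun k μb => ∑ j : Fin d, sgn (μb j) *
      (f (fun i => a i + h * k i + if (i : ℕ) ≤ (j : ℕ) then h * sgn (μb i) else 0) j
        - f (fun i => a i + h * k i + if (i : ℕ) < (j : ℕ) then h * sgn (μb i) else 0) j) with hG
  have hcard : ∀ k μb, ℓ n k μb =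
      ∑ r ∈ Finset.range n, if K r = k ∧ M r = μb then h else 0 := by
    intro k μb
    rw [hℓ, ← Finset.sum_filter, Finset.sum_const, nsmul_eq_mul, mul_comm]
    congr 2
    apply Nat.subtype_card
    intro r
    rw [Finset.mem_filter, Finset.mem_range]
    refine and_congr_right fun _ => ?_
    constructor
    · rintro ⟨rfl, rfl⟩
      exact ⟨hSK r, fun i => by rw [hSs, hSK]⟩
    · rintro ⟨h1, h2⟩
      have e1 : K r = k := by
        funext i
        have := h1 i
        rw [hSK] at this
        have := mul_left_cancel₀ hh.ne' (add_left_cancel this)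
        exact_mod_cast this
      refine ⟨e1, ?_⟩
      funext i
      have := h2 i
      rw [hSs, h1] at this
      exact sgn_inj _ _ (mul_left_cancel₀ hh.ne' (add_left_cancel this))
  have hF : ∀ k : Fin d → ℤ, ∑ μb : Fin d → Bool, ℓ n k μb * G k μb =
      ∑ r ∈ Finset.range n, if K r = k then h * G (K r) (M r) else 0 := by
    intro k
    simp only [hcard, Finset.sum_mul]
    rw [Finset.sum_comm]
    refine Finset.sum_congr rfl fun r _ => ?_
    by_cases hk : K r = k
    · subst hk
      simp
    · simp [hk]
  have hsupp : Function.support (fun k : Fin d → ℤ => ∑ μb : Fin d → Bool,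
      ℓ n k μb * G k μb) ⊆ ((Finset.range n).image K : Finset (Fin d → ℤ)) := by
    intro k hk
    rw [Function.mem_support, hF] at hk
    obtain ⟨r, hr, hne⟩ := Finset.exists_ne_zero_of_sum_ne_zero hk
    rw [Finset.mem_coe, Finset.mem_image]
    refine ⟨r, hr, ?_⟩
    by_contra hc
    simp [hc] at hne
  refine ⟨(Finset.finite_toSet _).subset hsupp, ?_⟩
  have hfin : ∑ᶠ k : Fin d → ℤ, ∑ μb : Fin d → Bool, ℓ n k μb * G k μb =
      ∑ r ∈ Finset.range n, h * G (K r) (M r) := by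
    rw [finsum_eq_sum_of_support_subset _ hsupp]
    simp only [hF]
    rw [Finset.sum_comm]
    refine Finset.sum_congr rfl fun r hr => ?_
    rw [Finset.sum_ite_eq, if_pos (Finset.mem_image_of_mem K hr)]
  rw [hfin]
  obtain ⟨δ, h1, h2⟩ := exists_full_path d h f M S hSs n
  rw [hS0] at h1 h2
  rw [path_indep d a h f hf γ δ (hγ.trans h1.symm), h2]
  have hIcc : ∀ g : ℕ → ℝ, ∑ r ∈ Finset.Icc 1 n, g r = ∑ r ∈ Finset.range n, g (r + 1) := by
    intro g
    rw [Finset.range_eq_Ico, Finset.sum_Ico_add' g 0 n 1]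
    rfl
  rw [hIcc, Finset.mul_sum, ← Finset.sum_add_distrib]
  refine Finset.sum_congr rfl fun r _ => ?_
  simp only [hG, Finset.mul_sum, ← Finset.sum_add_distrib]
  refine Finset.sum_congr rfl fun j _ => ?_
  simp only [← hSK, hM, Nat.add_sub_cancel]
  ring
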